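/- Let a and b be geometrically linked by I over M (linked with aM ∩ bM = IM), with I generated by an M-regular sequence of length t, and suppose M is not relative Cohen-Macaulay with respect to a (i.e., cd(a, M) > grade_M(a)). Then cd(a, M) = cd(a, H^{grade_M a}_b(M)) + grade_M(a). -/

import Mathlib

universe u

open RingTheory.Sequence CategoryTheory

noncomputable section

/-- `N :_M a`, set of `m : M` with `a • m ⊆ N`. -/
def Submodule.modColon {R : Type u} [CommRing R] {M : Type u} [AddCommGroup M] [Module R M]
    (N : Submodule R M) (a : Ideal R) : Submodule R M :=
  ⨅ r ∈ a, N.comap (LinearMap.lsmul R M r)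

/-- The ideals `a` and `b` are linked by `I` over `M`: `I ⊆ a ⊓ b` is generated by an
`M`-regular sequence, `bM = IM :_M a`, `aM = IM :_M b`, and `aM ≠ M ≠ bM`. -/
def Ideal.IsLinkedBy {R : Type u} [CommRing R] (M : Type u) [AddCommGroup M] [Module R M]
    (I a b : Ideal R) : Prop :=
  (∃ rs : List R, RingTheory.Sequence.IsRegular M rs ∧ I = Ideal.ofList rs) ∧
  I ≤ a ⊓ b ∧
  a • (⊤ : Submodule R M) ≠ ⊤ ∧ b • (⊤ : Submodule R M) ≠ ⊤ ∧
  Submodule.modColon (I • (⊤ : Submodule R M)) a = b • (⊤ : Submodule R M) ∧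
  Submodule.modColon (I • (⊤ : Submodule R M)) b = a • (⊤ : Submodule R M)

/-- Cohomological dimension `cd(a, M) = sup { i | H^i_a(M) ≠ 0 }`. -/
def cohDim {R : Type u} [CommRing R] (a : Ideal R) (M : Type u) [AddCommGroup M]
    [Module R M] : ℕ∞ :=
  sSup {n : ℕ∞ | ∃ i : ℕ, n = i ∧ Nontrivial ↥((localCohomology a i).obj (ModuleCat.of R M))}

/-- `grade_M(a)`: the supremum of lengths of `M`-regular sequences contained in `a`. -/
def gradeM {R : Type u} [CommRing R] (a : Ideal R) (M : Type u) [AddCommGroup M]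
    [Module R M] : ℕ :=
  sSup {n : ℕ | ∃ rs : List R, rs.length = n ∧ (∀ r ∈ rs, r ∈ a) ∧
    RingTheory.Sequence.IsRegular M rs}

variable {R : Type u} [CommRing R] [IsNoetherianRing R]
variable {M : Type u} [AddCommGroup M] [Module R M] [Module.Finite R M] [Nontrivial M]

/-!
Let `x₁, …, xₜ` be a regular sequence generating `I`, and let `K` be the iterated quotient
`(⋯(M_{x₁} ⧸ M)_{x₂} ⧸ ⋯)`. A localization at an element of an ideal `c` has no local cohomology at
`c`, so for every `c ⊇ I` the connecting morphisms give `H^{i+t}_c(M) ≅ H^i_c(K)`, while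
`H^i_c(M) = 0` for `i < t`. In particular `H^t_b(M) ≅ Γ_b(K)`.

The map `M → K`, `m ↦ m / (x₁ ⋯ xₜ)` has kernel `IM`, so an element of `IM :_M a` outside `IM`
yields a nonzero element of `Γ_a(K) ≅ H^t_a(M)`. Hence `grade_M(a) = t` and
`cd(a, M) = cd(a, K) + t`. Since `abM ⊆ IM`, the module `K` is `ab`-torsion, so `K ⧸ Γ_b(K)` is
`a`-torsion and its local cohomology at `a` vanishes in positive degrees. Therefore
`cd(a, Γ_b(K)) = cd(a, K)` as soon as `cd(a, K) > 0`, that is, `cd(a, M) > grade_M(a)`.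
-/

open Limits

section LeftDerived

variable {C D : Type*} [Category C] [Category D] [Abelian C] [Abelian D]
  [HasProjectiveResolutions C]

/-- The value of a left derived functor as the homology of the chosen projective resolution; this
is `ProjectiveResolution.isoLeftDerivedObj` with a target on which homology maps compose. -/
def leftDerivedObjIso (F : C ⥤ D) [F.Additive] (X : C) (n : ℕ) : (F.leftDerived n).obj X ≅
    ((F.mapHomologicalComplex (ComplexShape.down ℕ)).obj
      (projectiveResolution X).complex).homology n :=
  (projectiveResolution X).isoLeftDerivedObj F n

lemma leftDerived_map_eq (F : C ⥤ D) [F.Additive] {X Y : C} (φ : X ⟶ Y) (n : ℕ) :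
    (F.leftDerived n).map φ = (leftDerivedObjIso F X n).hom ≫
      HomologicalComplex.homologyMap ((F.mapHomologicalComplex _).map
        (ProjectiveResolution.lift φ (projectiveResolution X) (projectiveResolution Y))) n ≫
      (leftDerivedObjIso F Y n).inv :=
  Functor.leftDerived_map_eq F n φ _ (ProjectiveResolution.lift_commutes φ _ _)

lemma leftDerived_map_zero (F : C ⥤ D) [F.Additive] (X Y : C) (n : ℕ) :
    (F.leftDerived n).map (0 : X ⟶ Y) = 0 := by
  rw [Functor.leftDerived_map_eq F n 0 (P := projectiveResolution X)
    (Q := projectiveResolution Y) 0 (by simp), Functor.map_zero]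
  simp

lemma leftDerived_app_eq {F G : C ⥤ D} [F.Additive] [G.Additive] (α : F ⟶ G) (X : C) (n : ℕ) :
    (NatTrans.leftDerived α n).app X = (leftDerivedObjIso F X n).hom ≫
      HomologicalComplex.homologyMap ((NatTrans.mapHomologicalComplex α _).app _) n ≫
      (leftDerivedObjIso G X n).inv :=
  (projectiveResolution X).leftDerived_app_eq α n

lemma leftDerived_comp_fromLeftDerivedZero {F G : C ⥤ D} [F.Additive] [G.Additive] (α : F ⟶ G) :
    NatTrans.leftDerived α 0 ≫ G.fromLeftDerivedZero = F.fromLeftDerivedZero ≫ α := by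
  ext X
  let P := projectiveResolution X
  have opcycles_comm : HomologicalComplex.opcyclesMap
      ((NatTrans.mapHomologicalComplex α _).app P.complex) 0 ≫ P.fromLeftDerivedZero' G =
      P.fromLeftDerivedZero' F ≫ α.app X := by
    rw [← cancel_epi (HomologicalComplex.pOpcycles _ _), HomologicalComplex.p_opcyclesMap_assoc,
      P.pOpcycles_comp_fromLeftDerivedZero' G, P.pOpcycles_comp_fromLeftDerivedZero'_assoc F]
    exact (α.naturality (P.π.f 0)).symm
  have homologyι_comm := HomologicalComplex.homologyι_naturality
    ((NatTrans.mapHomologicalComplex α _).app P.complex) 0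
  rw [NatTrans.comp_app, NatTrans.comp_app, P.fromLeftDerivedZero_eq, P.fromLeftDerivedZero_eq,
    P.leftDerived_app_eq]
  simp only [Category.assoc, Iso.inv_hom_id_assoc]
  refine congrArg _ (((reassoc_of% homologyι_comm) _).trans ?_)
  exact (congrArg _ opcycles_comm).trans (Category.assoc _ _ _).symm

variable (S : ShortComplex (C ⥤ D)) [S.X₁.Additive] [S.X₂.Additive] [S.X₃.Additive]

/-- The short complex of chain complexes obtained by applying a short complex of additive
functors to the chosen projective resolution of `X`. -/
abbrev resolutionShortComplex (X : C) : ShortComplex (ChainComplex D ℕ) :=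
  ShortComplex.mk
    ((NatTrans.mapHomologicalComplex S.f _).app (projectiveResolution X).complex)
    ((NatTrans.mapHomologicalComplex S.g _).app (projectiveResolution X).complex) (by
      ext n
      exact NatTrans.congr_app S.zero _)

/-- The functoriality of `resolutionShortComplex`, through the lift of a morphism to the
resolutions. -/
abbrev resolutionShortComplexMap {X Y : C} (φ : X ⟶ Y) :
    resolutionShortComplex S X ⟶ resolutionShortComplex S Y :=
  let ψ := ProjectiveResolution.lift φ (projectiveResolution X) (projectiveResolution Y)
  { τ₁ := (S.X₁.mapHomologicalComplex _).map ψ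
    τ₂ := (S.X₂.mapHomologicalComplex _).map ψ
    τ₃ := (S.X₃.mapHomologicalComplex _).map ψ
    comm₁₂ := (NatTrans.mapHomologicalComplex S.f _).naturality ψ
    comm₂₃ := (NatTrans.mapHomologicalComplex S.g _).naturality ψ }

lemma leftDerived_comp_zero (n : ℕ) :
    NatTrans.leftDerived S.f n ≫ NatTrans.leftDerived S.g n = 0 := by
  ext X
  have := congrArg (HomologicalComplex.homologyMap · n) (resolutionShortComplex S X).zero
  simp only [HomologicalComplex.homologyMap_comp, HomologicalComplex.homologyMap_zero] at this
  simp [leftDerived_app_eq, reassoc_of% this]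

variable {S}
variable (hS : ∀ (P : C) [Projective P], (S.map ((evaluation C D).obj P)).ShortExact)

include hS in
lemma resolutionShortComplex_shortExact (X : C) : (resolutionShortComplex S X).ShortExact :=
  HomologicalComplex.shortExact_of_degreewise_shortExact _ fun n =>
    have := (projectiveResolution X).projective n
    hS ((projectiveResolution X).complex.X n)

/-- The connecting morphism `L_{n+1} F₃ ⟶ L_n F₁` of a sequence of additive functors
`F₁ ⟶ F₂ ⟶ F₃` that is short exact on projective objects. -/
def leftDerivedδ (n : ℕ) : S.X₃.leftDerived (n + 1) ⟶ S.X₁.leftDerived n where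
  app X := (leftDerivedObjIso S.X₃ X (n + 1)).hom ≫
    (resolutionShortComplex_shortExact hS X).δ (n + 1) n (ComplexShape.down_mk _ _ rfl) ≫
      (leftDerivedObjIso S.X₁ X n).inv
  naturality X Y φ := by
    have := HomologicalComplex.HomologySequence.δ_naturality (resolutionShortComplexMap S φ)
      (resolutionShortComplex_shortExact hS X) (resolutionShortComplex_shortExact hS Y)
      (n + 1) n (ComplexShape.down_mk _ _ rfl)
    simp [leftDerived_map_eq, reassoc_of% this]

lemma leftDerivedδ_comp (n : ℕ) :
    leftDerivedδ hS n ≫ NatTrans.leftDerived S.f n = 0 := by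
  ext X
  have := (resolutionShortComplex_shortExact hS X).δ_comp (n + 1) n (ComplexShape.down_mk _ _ rfl)
  simp [leftDerivedδ, leftDerived_app_eq, reassoc_of% this]

lemma leftDerived_comp_δ (n : ℕ) :
    NatTrans.leftDerived S.g (n + 1) ≫ leftDerivedδ hS n = 0 := by
  ext X
  have := (resolutionShortComplex_shortExact hS X).comp_δ (n + 1) n (ComplexShape.down_mk _ _ rfl)
  simp [leftDerivedδ, leftDerived_app_eq, reassoc_of% this]

lemma leftDerived_exact₁ (n : ℕ) (X : C) :
    (ShortComplex.mk ((leftDerivedδ hS n).app X) ((NatTrans.leftDerived S.f n).app X)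
      (NatTrans.congr_app (leftDerivedδ_comp hS n) X)).Exact :=
  ShortComplex.exact_of_iso (ShortComplex.isoMk (leftDerivedObjIso S.X₃ X (n + 1)).symm
    (leftDerivedObjIso S.X₁ X n).symm (leftDerivedObjIso S.X₂ X n).symm
    (by simp [leftDerivedδ]) (by simp [leftDerived_app_eq]))
    ((resolutionShortComplex_shortExact hS X).homology_exact₁ (n + 1) n
      (ComplexShape.down_mk _ _ rfl))

include hS in
lemma leftDerived_exact₂ (n : ℕ) (X : C) :
    (ShortComplex.mk ((NatTrans.leftDerived S.f n).app X) ((NatTrans.leftDerived S.g n).app X)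
      (NatTrans.congr_app (leftDerived_comp_zero S n) X)).Exact :=
  ShortComplex.exact_of_iso (ShortComplex.isoMk (leftDerivedObjIso S.X₁ X n).symm
    (leftDerivedObjIso S.X₂ X n).symm (leftDerivedObjIso S.X₃ X n).symm
    (by simp [leftDerived_app_eq]) (by simp [leftDerived_app_eq]))
    ((resolutionShortComplex_shortExact hS X).homology_exact₂ n)

lemma leftDerived_exact₃ (n : ℕ) (X : C) :
    (ShortComplex.mk ((NatTrans.leftDerived S.g (n + 1)).app X) ((leftDerivedδ hS n).app X)
      (NatTrans.congr_app (leftDerived_comp_δ hS n) X)).Exact :=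
  ShortComplex.exact_of_iso (ShortComplex.isoMk (leftDerivedObjIso S.X₂ X (n + 1)).symm
    (leftDerivedObjIso S.X₃ X (n + 1)).symm (leftDerivedObjIso S.X₁ X n).symm
    (by simp [leftDerived_app_eq]) (by simp [leftDerivedδ]))
    ((resolutionShortComplex_shortExact hS X).homology_exact₃ (n + 1) n
      (ComplexShape.down_mk _ _ rfl))

end LeftDerived

section Ext

variable {R : Type*} [Ring R] {C : Type*} [Category C] [Abelian C] [Linear R C]

variable (R) in
/-- The sequence `Hom(-, S.X₃) ⟶ Hom(-, S.X₂) ⟶ Hom(-, S.X₁)` of covariant functors to the opposite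
category, whose left derived functors are the `Ext` functors. -/
abbrev linearYonedaShortComplex (S : ShortComplex C) : ShortComplex (C ⥤ (ModuleCat R)ᵒᵖ) :=
  ShortComplex.mk (NatTrans.rightOp ((linearYoneda R C).map S.g))
    (NatTrans.rightOp ((linearYoneda R C).map S.f)) (by
      ext P
      refine Quiver.Hom.unop_inj ?_
      ext (φ : P ⟶ S.X₁)
      change (φ ≫ S.f) ≫ S.g = 0
      simp)

instance (S : ShortComplex C) : (linearYonedaShortComplex R S).X₁.Additive :=
  inferInstanceAs ((linearYoneda R C).obj S.X₃).rightOp.Additive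

variable {S : ShortComplex C} (hS : S.ShortExact)

include hS in
lemma linearYonedaShortComplex_shortExact (P : C) [Projective P] :
    ((linearYonedaShortComplex R S).map ((evaluation C (ModuleCat R)ᵒᵖ).obj P)).ShortExact := by
  have := hS.mono_f
  have := hS.epi_g
  let T : ShortComplex (ModuleCat R) :=
    ((linearYonedaShortComplex R S).map ((evaluation C (ModuleCat R)ᵒᵖ).obj P)).unop
  have exact : T.Exact := by
    rw [ShortComplex.moduleCat_exact_iff]
    intro (φ : P ⟶ S.X₂) (hφ : φ ≫ S.g = 0)
    exact ⟨hS.exact.lift φ hφ, hS.exact.lift_f φ hφ⟩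
  have mono : Mono T.f := by
    rw [ModuleCat.mono_iff_injective]
    exact fun (φ ψ : P ⟶ S.X₁) (h : φ ≫ S.f = ψ ≫ S.f) => (cancel_mono S.f).1 h
  have epi : Epi T.g := by
    rw [ModuleCat.epi_iff_surjective]
    exact fun (φ : P ⟶ S.X₃) => ⟨Projective.factorThru φ S.g, Projective.factorThru_comp φ S.g⟩
  exact (ShortComplex.ShortExact.mk' exact mono epi).op

variable [EnoughProjectives C]

variable (R) in
/-- The connecting morphism `Ext^i(-, S.X₃) ⟶ Ext^{i+1}(-, S.X₁)` of a short exact sequence. -/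
def extδ (i : ℕ) : Ext R C i ⋙ (evaluation _ _).obj S.X₃ ⟶
    Ext R C (i + 1) ⋙ (evaluation _ _).obj S.X₁ :=
  NatTrans.leftOp (leftDerivedδ (linearYonedaShortComplex_shortExact (R := R) hS) i)

lemma ext_exact₁ (i : ℕ) (X : Cᵒᵖ) :
    Function.Exact ((extδ R hS i).app X).hom (((Ext R C (i + 1)).obj X).map S.f).hom :=
  (ShortComplex.ShortExact.moduleCat_exact_iff_function_exact _).1
    (leftDerived_exact₃ (linearYonedaShortComplex_shortExact hS) i X.unop).unop

include hS in
lemma ext_exact₂ (i : ℕ) (X : Cᵒᵖ) :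
    Function.Exact (((Ext R C i).obj X).map S.f).hom (((Ext R C i).obj X).map S.g).hom :=
  (ShortComplex.ShortExact.moduleCat_exact_iff_function_exact _).1
    (leftDerived_exact₂ (linearYonedaShortComplex_shortExact hS) i X.unop).unop

lemma ext_exact₃ (i : ℕ) (X : Cᵒᵖ) :
    Function.Exact (((Ext R C i).obj X).map S.g).hom ((extδ R hS i).app X).hom :=
  (ShortComplex.ShortExact.moduleCat_exact_iff_function_exact _).1
    (leftDerived_exact₁ (linearYonedaShortComplex_shortExact hS) i X.unop).unop

lemma isZero_ext_succ_of_injective (X : Cᵒᵖ) (Y : C) [Injective Y] (i : ℕ) :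
    IsZero (((Ext R C (i + 1)).obj X).obj Y) := by
  let P := projectiveResolution X.unop
  refine IsZero.of_iso ?_ (P.isoExt (i + 1) Y)
  rw [← HomologicalComplex.exactAt_iff_isZero_homology,
    HomologicalComplex.exactAt_iff' _ i (i + 1) (i + 2) (by simp) (by simp),
    ShortComplex.moduleCat_exact_iff]
  intro (φ : P.complex.X (i + 1) ⟶ Y) (hφ : P.complex.d (i + 2) (i + 1) ≫ φ = 0)
  exact ⟨(P.exact_succ i).descToInjective φ hφ, (P.exact_succ i).comp_descToInjective φ hφ⟩

lemma ext_map_smul_id (X : Cᵒᵖ) (Y : C) (n : ℕ) (r : R) :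
    ((Ext R C n).obj X).map (r • 𝟙 Y) = ((Ext R C n).map (r • 𝟙 X.unop).op).app Y := by
  let F := ((linearYoneda R C).obj Y).rightOp
  let P := projectiveResolution X.unop
  let α : F ⟶ F := NatTrans.rightOp ((linearYoneda R C).map (r • 𝟙 Y))
  have lift_comm : (r • 𝟙 P.complex) ≫ P.π =
      P.π ≫ (ChainComplex.single₀ C).map (r • 𝟙 X.unop) := by
    ext
    simp only [ChainComplex.single₀_obj_zero, Linear.smul_comp, Category.id_comp,
      HomologicalComplex.smul_f_apply, HomologicalComplex.comp_f, ChainComplex.single₀_map_f_zero]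
    exact ((Linear.comp_smul _ X.unop _ (P.π.f 0) r (𝟙 _)).trans
      (congrArg (r • ·) (Category.comp_id _))).symm
  have chain_eq : (NatTrans.mapHomologicalComplex α (ComplexShape.down ℕ)).app P.complex =
      (F.mapHomologicalComplex (ComplexShape.down ℕ)).map (r • 𝟙 P.complex) := by
    ext k
    refine Quiver.Hom.unop_inj ?_
    ext (φ : P.complex.X k ⟶ Y)
    change φ ≫ (r • 𝟙 Y) = (r • 𝟙 (P.complex.X k)) ≫ φ
    simp
  refine Quiver.Hom.op_inj ?_
  change (NatTrans.leftDerived α n).app X.unop = (F.leftDerived n).map (r • 𝟙 X.unop)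
  rw [Functor.leftDerived_map_eq F n _ _ lift_comm, P.leftDerived_app_eq, chain_eq]
  rfl

lemma ext_map_zero_app (X : Cᵒᵖ) (Y : C) (n : ℕ) :
    ((Ext R C n).map (0 : X.unop ⟶ X.unop).op).app Y = 0 := by
  let F := ((linearYoneda R C).obj Y).rightOp
  have : (F.leftDerived n).map (0 : X.unop ⟶ X.unop) = 0 := leftDerived_map_zero F _ _ n
  exact congrArg Quiver.Hom.unop this

lemma isZero_ext_of_smul_id (X : Cᵒᵖ) (Y : C) (n : ℕ) {r : R} (hX : r • 𝟙 X.unop = 0)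
    (hY : IsIso (r • 𝟙 Y)) : IsZero (((Ext R C n).obj X).obj Y) := by
  have h : ((Ext R C n).obj X).map (r • 𝟙 Y) = 0 := by
    rw [ext_map_smul_id, hX, ext_map_zero_app]
  have : IsIso (((Ext R C n).obj X).map (r • 𝟙 Y)) := inferInstance
  exact IsZero.of_mono_eq_zero _ h

end Ext

section ExtZero

variable (R : Type*) [Ring R] (C : Type*) [Category C] [Abelian C] [Linear R C]

instance (Y : C) : PreservesFiniteColimits ((linearYoneda R C).obj Y).rightOp :=
  have : PreservesFiniteLimits ((linearYoneda R C).obj Y) := ⟨fun J _ _ =>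
    have : PreservesLimitsOfShape J ((linearYoneda R C).obj Y ⋙ forget (ModuleCat R)) :=
      inferInstanceAs (PreservesLimitsOfShape J (yoneda.obj Y))
    preservesLimitsOfShape_of_reflects_of_preserves _ (forget (ModuleCat R))⟩
  preservesFiniteColimits_rightOp _

variable [EnoughProjectives C]

/-- The natural isomorphism `Ext^0(X, Y) ≅ Hom(X, Y)`. -/
def extZeroIso : Ext R C 0 ≅ linearCoyoneda R C :=
  (NatIso.ofComponents (fun X => NatIso.ofComponents
    (fun Y => (asIso (((linearYoneda R C).obj Y).rightOp.fromLeftDerivedZero.app X.unop)).unop)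
    (fun {Y Z} f => congrArg Quiver.Hom.unop (NatTrans.congr_app
      (leftDerived_comp_fromLeftDerivedZero (NatTrans.rightOp ((linearYoneda R C).map f)))
        X.unop).symm))
    (fun {W X} f => by
      ext Y : 2
      exact congrArg Quiver.Hom.unop
        (((linearYoneda R C).obj Y).rightOp.fromLeftDerivedZero.naturality f.unop).symm)).symm

end ExtZero

section LocalCohomology

variable {A : Type u} [CommRing A]

instance : HasExactColimitsOfShape ℕᵒᵖᵒᵖ (ModuleCat.{u} A) :=
  (AB5OfSize_of_univLE.{0, 0, u, u} (ModuleCat.{u} A)).ofShape _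

lemma exact_of_isColimit {J : Type*} [Category J] [HasColimitsOfShape J (ModuleCat.{u} A)]
    [HasExactColimitsOfShape J (ModuleCat.{u} A)]
    {F G H : J ⥤ ModuleCat.{u} A} {cF : Cocone F} {cG : Cocone G} {cH : Cocone H}
    (hcF : IsColimit cF) (hcG : IsColimit cG) (hcH : IsColimit cH)
    (α : F ⟶ G) (β : G ⟶ H) (f : cF.pt ⟶ cG.pt) (g : cG.pt ⟶ cH.pt)
    (hf : ∀ j, cF.ι.app j ≫ f = α.app j ≫ cG.ι.app j)
    (hg : ∀ j, cG.ι.app j ≫ g = β.app j ≫ cH.ι.app j)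
    (h : ∀ j, Function.Exact (α.app j).hom (β.app j).hom) : Function.Exact f.hom g.hom := by
  let S : ShortComplex (J ⥤ ModuleCat.{u} A) :=
    ShortComplex.mk α β (by
      ext j x
      exact (h j).apply_apply_eq_zero x)
  have hS : S.Exact := by
    rw [ShortComplex.exact_iff_isZero_homology, Functor.isZero_iff]
    intro j
    refine IsZero.of_iso ?_ (S.mapHomologyIso ((evaluation J (ModuleCat.{u} A)).obj j)).symm
    rw [← ShortComplex.exact_iff_isZero_homology]
    exact (ShortComplex.ShortExact.moduleCat_exact_iff_function_exact _).2 (h j)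
  exact (ShortComplex.ShortExact.moduleCat_exact_iff_function_exact _).1
    (colim.exact_mapShortComplex hS hcF hcG hcH f g hf hg)

/-- The directed system `Ext^i(A ⧸ a ^ n, -)` whose colimit is `H^i_a`. -/
abbrev localCohomologyDiagram (a : Ideal A) (i : ℕ) :
    ℕᵒᵖᵒᵖ ⥤ ModuleCat.{u} A ⥤ ModuleCat.{u} A :=
  localCohomology.diagram (localCohomology.idealPowersDiagram a) i

/-- The colimit cocone defining `H^i_a(N)`, whose stages are the modules `Ext^i(A ⧸ a ^ n, N)`. -/
abbrev localCohomologyCocone (a : Ideal A) (i : ℕ) (N : ModuleCat.{u} A) :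
    Cocone (localCohomologyDiagram a i ⋙ (evaluation _ _).obj N) :=
  ((evaluation _ _).obj N).mapCocone (colimit.cocone (localCohomologyDiagram a i))

/-- `H^i_a(N)` is the colimit of the modules `Ext^i(A ⧸ a ^ n, N)`, since evaluation at `N`
preserves colimits. -/
def isColimitLocalCohomologyCocone (a : Ideal A) (i : ℕ) (N : ModuleCat.{u} A) :
    IsColimit (localCohomologyCocone a i N) :=
  isColimitOfPreserves _ (colimit.isColimit _)

lemma subsingleton_localCohomology_of_isZero_ext {a : Ideal A} {i : ℕ} {N : ModuleCat.{u} A}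
    (h : ∀ n : ℕ, IsZero (((Ext A (ModuleCat.{u} A) i).obj
      (.op (ModuleCat.of A (A ⧸ a ^ n)))).obj N)) :
    Subsingleton ((localCohomology a i).obj N) := by
  refine ModuleCat.subsingleton_of_isZero ((IsZero.iff_id_eq_zero _).2 ?_)
  exact (isColimitLocalCohomologyCocone a i N).hom_ext fun j => (h j.unop.unop).eq_of_src _ _

lemma subsingleton_localCohomology_succ_of_injective (a : Ideal A) (i : ℕ) (N : ModuleCat.{u} A)
    [Injective N] : Subsingleton ((localCohomology a (i + 1)).obj N) :=
  subsingleton_localCohomology_of_isZero_ext fun _ => isZero_ext_succ_of_injective _ N i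

lemma subsingleton_localCohomology_of_bijective_smul {a : Ideal A} {x : A} (hx : x ∈ a)
    {N : ModuleCat.{u} A} (hN : Function.Bijective (x • · : N → N)) (i : ℕ) :
    Subsingleton ((localCohomology a i).obj N) := by
  refine subsingleton_localCohomology_of_isZero_ext fun n =>
    isZero_ext_of_smul_id (r := x ^ n) _ N i ?_ ?_
  · ext
    change Ideal.Quotient.mk (a ^ n) (x ^ n * 1) = 0
    rw [mul_one, Ideal.Quotient.eq_zero_iff_mem]
    exact Ideal.pow_mem_pow hx n
  · rw [ConcreteCategory.isIso_iff_bijective]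
    change Function.Bijective (x ^ n • · : N → N)
    simpa only [smul_iterate] using hN.iterate n

section Cokernel

variable {N K : Type u} [AddCommGroup N] [Module A N] [AddCommGroup K] [Module A K]

/-- The complex `N ⟶ K ⟶ K ⧸ range f`, short exact when `f` is injective. -/
def cokernelShortComplex (f : N →ₗ[A] K) : ShortComplex (ModuleCat.{u} A) :=
  ModuleCat.shortComplexOfCompEqZero f _ f.exact_map_mkQ_range.linearMap_comp_eq_zero

lemma cokernelShortComplex_shortExact {f : N →ₗ[A] K} (hf : Function.Injective f) :
    (cokernelShortComplex f).ShortExact :=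
  ModuleCat.shortComplex_shortExact _ f.exact_map_mkQ_range hf (Submodule.mkQ_surjective _)

end Cokernel

variable (a : Ideal A) {S : ShortComplex (ModuleCat.{u} A)} (hS : S.ShortExact)

/-- The connecting morphism `H^i_a(S.X₃) ⟶ H^{i+1}_a(S.X₁)` of a short exact sequence. -/
def localCohomologyδ (i : ℕ) :
    (localCohomology a i).obj S.X₃ ⟶ (localCohomology a (i + 1)).obj S.X₁ :=
  (isColimitLocalCohomologyCocone a i S.X₃).map (localCohomologyCocone a (i + 1) S.X₁)
    (Functor.whiskerLeft (localCohomology.ringModIdeals _).op (extδ A hS i))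

lemma localCohomology_exact₁ (i : ℕ) : Function.Exact (localCohomologyδ a hS i).hom
    ((localCohomology a (i + 1)).map S.f).hom :=
  exact_of_isColimit (isColimitLocalCohomologyCocone a i S.X₃)
    (isColimitLocalCohomologyCocone a (i + 1) S.X₁) (isColimitLocalCohomologyCocone a (i + 1) S.X₂)
    (Functor.whiskerLeft (localCohomology.ringModIdeals _).op (extδ A hS i))
    (Functor.whiskerLeft _ ((evaluation _ _).map S.f)) _ _
    (IsColimit.ι_map _ _ _)
    (fun j => ((colimit.ι (localCohomologyDiagram a (i + 1)) j).naturality S.f).symm)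
    fun _ => ext_exact₁ hS i _

include hS in
lemma localCohomology_exact₂ (i : ℕ) : Function.Exact ((localCohomology a i).map S.f).hom
    ((localCohomology a i).map S.g).hom :=
  exact_of_isColimit (isColimitLocalCohomologyCocone a i S.X₁)
    (isColimitLocalCohomologyCocone a i S.X₂) (isColimitLocalCohomologyCocone a i S.X₃)
    (Functor.whiskerLeft _ ((evaluation _ _).map S.f))
    (Functor.whiskerLeft _ ((evaluation _ _).map S.g)) _ _
    (fun j => ((colimit.ι (localCohomologyDiagram a i) j).naturality S.f).symm)
    (fun j => ((colimit.ι (localCohomologyDiagram a i) j).naturality S.g).symm)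
    fun _ => ext_exact₂ hS i _

lemma localCohomology_exact₃ (i : ℕ) : Function.Exact ((localCohomology a i).map S.g).hom
    (localCohomologyδ a hS i).hom :=
  exact_of_isColimit (isColimitLocalCohomologyCocone a i S.X₂)
    (isColimitLocalCohomologyCocone a i S.X₃) (isColimitLocalCohomologyCocone a (i + 1) S.X₁)
    (Functor.whiskerLeft _ ((evaluation _ _).map S.g))
    (Functor.whiskerLeft (localCohomology.ringModIdeals _).op (extδ A hS i)) _ _
    (fun j => ((colimit.ι (localCohomologyDiagram a i) j).naturality S.g).symm)
    (IsColimit.ι_map _ _ _)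
    fun _ => ext_exact₃ hS i _

variable {a}

include hS in
lemma subsingleton_localCohomology_succ_of_surjective {i : ℕ}
    (h : Subsingleton ((localCohomology a (i + 1)).obj S.X₂))
    (hg : Function.Surjective ((localCohomology a i).map S.g)) :
    Subsingleton ((localCohomology a (i + 1)).obj S.X₁) := by
  refine subsingleton_of_forall_eq 0 fun y => ?_
  obtain ⟨z, rfl⟩ := (localCohomology_exact₁ a hS i y).1 (Subsingleton.elim _ _)
  obtain ⟨w, rfl⟩ := hg z
  exact (localCohomology_exact₃ a hS i).apply_apply_eq_zero w

lemma mem_primaryComponent_iff {N : Type*} [AddCommGroup N] [Module A N] {a : Ideal A} {x : N} :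
    x ∈ a.primaryComponent N ↔ ∃ n, ∀ r ∈ a ^ n, r • x = 0 := by
  simp only [Ideal.primaryComponent_mem, Submodule.mem_torsionBySet_iff, SetLike.coe_sort_coe,
    Subtype.forall]

variable (a)

/-- Evaluation at `1` as a cocone `Hom(A ⧸ a ^ n, N) ⟶ N`, naturally in `N`. -/
def evalOneCocone : Cocone ((localCohomology.ringModIdeals
    (localCohomology.idealPowersDiagram a)).op ⋙ linearCoyoneda A (ModuleCat.{u} A)) where
  pt := 𝟭 _
  ι :=
    { app j :=
        { app N := ModuleCat.ofHom (X := ModuleCat.of A (A ⧸ a ^ j.unop.unop) ⟶ N)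
            { toFun f := f.hom (Submodule.Quotient.mk 1)
              map_add' _ _ := rfl
              map_smul' _ _ := rfl }
          naturality _ _ _ := rfl }
      naturality _ _ _ := rfl }

/-- The inclusion of `H^0_a(N)` into `N`, induced by `H^0_a(N) = colim Hom(A ⧸ a ^ n, N)`. -/
def localCohomologyZeroι : localCohomology a 0 ⟶ 𝟭 (ModuleCat.{u} A) :=
  colimit.desc (localCohomologyDiagram a 0) ((Cocone.precompose
    (Functor.isoWhiskerLeft _ (extZeroIso A (ModuleCat.{u} A))).hom).obj (evalOneCocone a))

/-- The stage map `Hom(A ⧸ a ^ n, N) ⟶ H^0_a(N)`. -/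
def homToLocalCohomologyZero (N : ModuleCat.{u} A) (n : ℕ) :
    ModuleCat.of A (ModuleCat.of A (A ⧸ a ^ n) ⟶ N) ⟶ (localCohomology a 0).obj N :=
  ((extZeroIso A (ModuleCat.{u} A)).inv.app (.op (ModuleCat.of A (A ⧸ a ^ n)))).app N ≫
    (colimit.ι (localCohomologyDiagram a 0) (.op (.op n))).app N

variable {a} {N : ModuleCat.{u} A}

lemma ι_localCohomologyZeroι_app (n : ℕ) :
    (colimit.ι (localCohomologyDiagram a 0) (.op (.op n))).app N ≫
        (localCohomologyZeroι a).app N =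
      ((extZeroIso A (ModuleCat.{u} A)).hom.app (.op (ModuleCat.of A (A ⧸ a ^ n)))).app N ≫
        ((evalOneCocone a).ι.app (.op (.op n))).app N :=
  NatTrans.congr_app (colimit.ι_desc _ _) N

lemma localCohomologyZeroι_app_homToLocalCohomologyZero {n : ℕ}
    (φ : ModuleCat.of A (A ⧸ a ^ n) ⟶ N) :
    (localCohomologyZeroι a).app N (homToLocalCohomologyZero a N n φ) =
      φ.hom (Submodule.Quotient.mk 1) := by
  let θ := ((extZeroIso A (ModuleCat.{u} A)).app (.op (ModuleCat.of A (A ⧸ a ^ n)))).app N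
  have h : homToLocalCohomologyZero a N n ≫ (localCohomologyZeroι a).app N =
      ((evalOneCocone a).ι.app (.op (.op n))).app N :=
    (Category.assoc _ _ _).trans ((congrArg (θ.inv ≫ ·)
      (ι_localCohomologyZeroι_app n)).trans (θ.inv_hom_id_assoc _))
  exact ConcreteCategory.congr_hom h φ

lemma exists_homToLocalCohomologyZero_eq (y : (localCohomology a 0).obj N) :
    ∃ (n : ℕ) (φ : ModuleCat.of A (A ⧸ a ^ n) ⟶ N), homToLocalCohomologyZero a N n φ = y := by
  have := (preservesFilteredColimitsOfSize_shrink.{0, u, 0, u}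
    (forget (ModuleCat.{u} A))).preserves_filtered_colimits ℕᵒᵖᵒᵖ
  obtain ⟨j, x, rfl⟩ := Concrete.isColimit_exists_rep _ (isColimitLocalCohomologyCocone a 0 N) y
  let θ := ((extZeroIso A (ModuleCat.{u} A)).app
    (.op (ModuleCat.of A (A ⧸ a ^ j.unop.unop)))).app N
  exact ⟨j.unop.unop, θ.hom x, congrArg _ (θ.hom_inv_id_apply x)⟩

lemma localCohomologyZeroι_app_injective :
    Function.Injective ((localCohomologyZeroι a).app N) := by
  rw [injective_iff_map_eq_zero]
  intro y hy
  obtain ⟨n, φ, rfl⟩ := exists_homToLocalCohomologyZero_eq y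
  rw [localCohomologyZeroι_app_homToLocalCohomologyZero] at hy
  have hφ : φ = 0 := by
    ext
    exact hy
  rw [hφ]
  exact map_zero (homToLocalCohomologyZero a N n).hom

lemma range_localCohomologyZeroι_app :
    LinearMap.range ((localCohomologyZeroι a).app N).hom = a.primaryComponent N := by
  refine SetLike.ext fun (x : N) => Iff.trans ?_ mem_primaryComponent_iff.symm
  constructor
  · rintro ⟨y, rfl⟩
    obtain ⟨n, φ, rfl⟩ := exists_homToLocalCohomologyZero_eq y
    refine ⟨n, fun r hr => ?_⟩
    have hr' : (Submodule.Quotient.mk (r * 1) : A ⧸ a ^ n) = 0 := by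
      rwa [Submodule.Quotient.mk_eq_zero, mul_one]
    exact (congrArg (r • ·) (localCohomologyZeroι_app_homToLocalCohomologyZero φ)).trans
      ((φ.hom.map_smul _ _).symm.trans ((congrArg φ.hom hr').trans (map_zero _)))
  · rintro ⟨n, hn⟩
    let φ : A ⧸ a ^ n →ₗ[A] N := Submodule.liftQ (a ^ n) (LinearMap.toSpanSingleton A N x) hn
    exact ⟨_, (localCohomologyZeroι_app_homToLocalCohomologyZero (ModuleCat.ofHom φ)).trans
      (one_smul A x)⟩

/-- `H^0_a(N)` is the `a`-power torsion submodule of `N`. -/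
def localCohomologyZeroEquiv (a : Ideal A) (N : ModuleCat.{u} A) :
    (localCohomology a 0).obj N ≃ₗ[A] a.primaryComponent N :=
  (LinearEquiv.ofInjective _ localCohomologyZeroι_app_injective).trans
    (LinearEquiv.ofEq _ _ range_localCohomologyZeroι_app)

end LocalCohomology

section PowerTorsion

variable {A : Type u} [CommRing A]

/-- `N` is `a`-torsion: every element of `N` is killed by a power of `a`. -/
def IsPowerTorsion (a : Ideal A) (N : Type*) [AddCommGroup N] [Module A N] : Prop :=
  ∀ x : N, ∃ n, ∀ r ∈ a ^ n, r • x = 0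

section Basic

variable {a : Ideal A} {L N : Type*} [AddCommGroup L] [Module A L] [AddCommGroup N] [Module A N]

lemma isPowerTorsion_primaryComponent : IsPowerTorsion a (a.primaryComponent N) := fun x => by
  obtain ⟨n, hn⟩ := mem_primaryComponent_iff.1 x.2
  exact ⟨n, fun r hr => Subtype.ext (hn r hr)⟩

lemma IsPowerTorsion.of_surjective (hL : IsPowerTorsion a L) {f : L →ₗ[A] N}
    (hf : Function.Surjective f) : IsPowerTorsion a N := fun y => by
  obtain ⟨x, rfl⟩ := hf y
  obtain ⟨n, hn⟩ := hL x
  exact ⟨n, fun r hr => by rw [← map_smul, hn r hr, map_zero]⟩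

lemma IsPowerTorsion.mem_primaryComponent (hL : IsPowerTorsion a L) (f : L →ₗ[A] N) (x : L) :
    f x ∈ a.primaryComponent N := by
  obtain ⟨n, hn⟩ := hL x
  exact mem_primaryComponent_iff.2 ⟨n, fun r hr => by rw [← map_smul, hn r hr, map_zero]⟩

lemma IsPowerTorsion.quotient_primaryComponent {b : Ideal A} (h : IsPowerTorsion (a * b) N) :
    IsPowerTorsion a (N ⧸ b.primaryComponent N) := fun q => by
  obtain ⟨m, rfl⟩ := Submodule.Quotient.mk_surjective _ q
  obtain ⟨n, hn⟩ := h m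
  refine ⟨n, fun r hr => (Submodule.Quotient.mk_eq_zero _).2
    (mem_primaryComponent_iff.2 ⟨n, fun s hs => ?_⟩)⟩
  rw [smul_smul, mul_comm]
  exact hn _ (mul_pow a b n ▸ Ideal.mul_mem_mul hr hs)

lemma IsPowerTorsion.exists_pow_le_annihilator (hL : IsPowerTorsion a L) {K : Submodule A L}
    (hK : K.FG) : ∃ n, a ^ n ≤ K.annihilator := by
  induction K, hK using Submodule.fg_induction with
  | singleton x =>
    obtain ⟨n, hn⟩ := hL x
    exact ⟨n, fun r hr => (Submodule.mem_annihilator_span_singleton x r).2 (hn r hr)⟩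
  | sup K₁ K₂ _ _ ih₁ ih₂ =>
    obtain ⟨m, hm⟩ := ih₁
    obtain ⟨n, hn⟩ := ih₂
    rw [Submodule.annihilator_sup]
    exact ⟨max m n, le_inf ((Ideal.pow_le_pow_right (le_max_left m n)).trans hm)
      ((Ideal.pow_le_pow_right (le_max_right m n)).trans hn)⟩

lemma IsPowerTorsion.exists_pow_smul_top_le_ker [IsNoetherianRing A] [Module.Finite A N]
    (hL : IsPowerTorsion a L) {J : Submodule A N} (f : J →ₗ[A] L) :
    ∃ n, ∀ x : J, (x : N) ∈ a ^ n • (⊤ : Submodule A N) → f x = 0 := by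
  obtain ⟨n, hn⟩ := hL.exists_pow_le_annihilator (Module.Finite.iff_fg.1 (Module.Finite.range f))
  obtain ⟨k, hk⟩ := Ideal.exists_pow_inf_eq_pow_smul a J
  refine ⟨k + n, fun x hx => ?_⟩
  have hxJ : x ∈ a ^ n • (⊤ : Submodule A J) := by
    have hx' : (x : N) ∈ a ^ (k + n) • (⊤ : Submodule A N) ⊓ J := ⟨hx, x.2⟩
    rw [hk (k + n) (Nat.le_add_right k n), Nat.add_sub_cancel_left] at hx'
    exact (Submodule.mem_smul_top_iff _ _ _).2 (Submodule.smul_mono le_rfl inf_le_right hx')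
  have hker : a ^ n • (⊤ : Submodule A J) ≤ LinearMap.ker f :=
    Submodule.smul_le.2 fun r hr y _ => by
      rw [LinearMap.mem_ker, map_smul]
      exact Submodule.mem_annihilator.1 (hn hr) _ ⟨y, rfl⟩
  exact hker hxJ

end Basic

lemma exists_mem_torsionBySet_smul_eq {E : Type u} [AddCommGroup E] [Module A E]
    [Module.Injective A E] {J q : Ideal A} (f : J →ₗ[A] E) (hf : ∀ x : J, (x : A) ∈ q → f x = 0) :
    ∃ e ∈ Submodule.torsionBySet A E q, ∀ x : J, f x = (x : A) • e := by
  let p : J →ₗ[A] A ⧸ q := q.mkQ ∘ₗ J.subtype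
  have hp : LinearMap.ker p ≤ LinearMap.ker f := fun x hx =>
    hf x ((Submodule.Quotient.mk_eq_zero q).1 hx)
  obtain ⟨g, hg⟩ := Module.Injective.out ((LinearMap.ker p).liftQ p le_rfl)
    (LinearMap.ker_eq_bot.1 (Submodule.ker_liftQ_eq_bot _ _ _ le_rfl))
    ((LinearMap.ker p).liftQ f hp)
  have hg_mk (r : A) : g (Submodule.Quotient.mk r) = r • g (Submodule.Quotient.mk 1) := by
    rw [← map_smul, ← Submodule.Quotient.mk_smul, smul_eq_mul, mul_one]
  refine ⟨g (Submodule.Quotient.mk 1), (Submodule.mem_torsionBySet_iff _ _).2 fun r => ?_,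
    fun x => ?_⟩
  · rw [← hg_mk, (Submodule.Quotient.mk_eq_zero q).2 r.2, map_zero]
  · exact (hg (Submodule.Quotient.mk x)).symm.trans (hg_mk x)

lemma baer_primaryComponent [IsNoetherianRing A] (a : Ideal A) (E : Type u) [AddCommGroup E]
    [Module A E] [Module.Injective A E] : Module.Baer A (a.primaryComponent E) := by
  intro J f
  obtain ⟨n, hn⟩ := isPowerTorsion_primaryComponent.exists_pow_smul_top_le_ker f
  obtain ⟨e, he, hfe⟩ := exists_mem_torsionBySet_smul_eq (q := a ^ n)
    ((a.primaryComponent E).subtype ∘ₗ f) fun x hx =>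
      congrArg Subtype.val (hn x (by simpa only [smul_eq_mul, Ideal.mul_top] using hx))
  have he' : e ∈ a.primaryComponent E := (Ideal.primaryComponent_mem E a e).2 ⟨n, he⟩
  exact ⟨LinearMap.toSpanSingleton A _ ⟨e, he'⟩, fun x hx => Subtype.ext (hfe ⟨x, hx⟩).symm⟩

lemma IsPowerTorsion.exists_injective [IsNoetherianRing A] {a : Ideal A} {L : Type u}
    [AddCommGroup L] [Module A L] (hL : IsPowerTorsion a L) :
    ∃ E : ModuleCat.{u} A, Injective E ∧ IsPowerTorsion a E ∧
      ∃ f : L →ₗ[A] E, Function.Injective f := by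
  let E := Injective.under (ModuleCat.of A L)
  have : Injective (ModuleCat.of A E) := inferInstanceAs (Injective E)
  have : Module.Injective A E := Module.injective_module_of_injective_object A E
  have := (baer_primaryComponent a E).injective
  let ι : L →ₗ[A] E := (Injective.ι (ModuleCat.of A L)).hom
  have hι : Function.Injective ι :=
    (ModuleCat.mono_iff_injective (Injective.ι (ModuleCat.of A L))).1 inferInstance
  exact ⟨ModuleCat.of A (a.primaryComponent E), Module.injective_object_of_injective_module A _,
    isPowerTorsion_primaryComponent, ι.codRestrict _ (hL.mem_primaryComponent ι),
    (LinearMap.injective_codRestrict_iff _).2 hι⟩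

lemma IsPowerTorsion.surjective_localCohomologyZeroι_app {a : Ideal A} {N : ModuleCat.{u} A}
    (hN : IsPowerTorsion a N) : Function.Surjective ((localCohomologyZeroι a).app N) := fun x =>
  range_localCohomologyZeroι_app.ge (hN.mem_primaryComponent LinearMap.id x)

lemma IsPowerTorsion.surjective_localCohomology_zero_map {a : Ideal A} {N K : ModuleCat.{u} A}
    (hN : IsPowerTorsion a N) {f : N ⟶ K} (hf : Function.Surjective f) :
    Function.Surjective ((localCohomology a 0).map f) := fun z => by
  obtain ⟨y, hy⟩ := hf ((localCohomologyZeroι a).app K z)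
  obtain ⟨x, rfl⟩ := hN.surjective_localCohomologyZeroι_app y
  exact ⟨x, localCohomologyZeroι_app_injective
    ((ConcreteCategory.congr_hom ((localCohomologyZeroι a).naturality f) x).trans hy)⟩

theorem IsPowerTorsion.subsingleton_localCohomology_succ [IsNoetherianRing A] {a : Ideal A}
    {L : Type u} [AddCommGroup L] [Module A L] (hL : IsPowerTorsion a L) (i : ℕ) :
    Subsingleton ((localCohomology a (i + 1)).obj (ModuleCat.of A L)) := by
  induction i generalizing L with
  | zero =>
    obtain ⟨E, _, hE, f, hf⟩ := hL.exists_injective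
    exact subsingleton_localCohomology_succ_of_surjective (cokernelShortComplex_shortExact hf)
      (subsingleton_localCohomology_succ_of_injective a 0 E)
      (hE.surjective_localCohomology_zero_map (Submodule.mkQ_surjective _))
  | succ i ih =>
    obtain ⟨E, _, hE, f, hf⟩ := hL.exists_injective
    have : Subsingleton ((localCohomology a (i + 1)).obj (cokernelShortComplex f).X₃) :=
      ih (hE.of_surjective (LinearMap.range f).mkQ_surjective)
    exact subsingleton_localCohomology_succ_of_surjective (cokernelShortComplex_shortExact hf)
      (subsingleton_localCohomology_succ_of_injective a (i + 1) E)
      (Function.surjective_to_subsingleton _)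

end PowerTorsion

section TopCech

variable {A : Type u} [CommRing A]

lemma injective_mkLinearMap_powers {x : A} {N : Type*} [AddCommGroup N] [Module A N]
    (hx : IsSMulRegular N x) :
    Function.Injective (LocalizedModule.mkLinearMap (Submonoid.powers x) N) :=
  (IsLocalizedModule.injective_iff_isRegular (Submonoid.powers x) _).2 fun ⟨_, n, hn⟩ =>
    hn ▸ hx.pow n

/-- The quotient `N_x ⧸ N`, more precisely the cokernel of `N → N_x`; when `x` is regular on `N`
this is the first local cohomology of `N` at `x`. -/
abbrev AwayQuotient (x : A) (N : Type u) [AddCommGroup N] [Module A N] : Type u :=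
  LocalizedModule (Submonoid.powers x) N ⧸
    LinearMap.range (LocalizedModule.mkLinearMap (Submonoid.powers x) N)

namespace AwayQuotient

variable {x : A} {N : Type u} [AddCommGroup N] [Module A N]

variable (x N) in
/-- The map `m ↦ m / x ^ k` from `N` to `N_x ⧸ N`. -/
def mk (k : ℕ) : N →ₗ[A] AwayQuotient x N :=
  Submodule.mkQ _ ∘ₗ
    { toFun m := IsLocalizedModule.mk' (LocalizedModule.mkLinearMap (Submonoid.powers x) N) m
        (⟨x ^ k, k, rfl⟩ : Submonoid.powers x)
      map_add' m n := IsLocalizedModule.mk'_add _ m n _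
      map_smul' r m := IsLocalizedModule.mk'_smul _ r m _ }

lemma exists_mk_eq (q : AwayQuotient x N) : ∃ k m, mk x N k m = q := by
  obtain ⟨q, rfl⟩ := Submodule.mkQ_surjective _ q
  obtain ⟨⟨m, _, k, rfl⟩, rfl⟩ :=
    IsLocalizedModule.mk'_surjective (Submonoid.powers x) (LocalizedModule.mkLinearMap _ N) q
  exact ⟨k, m, rfl⟩

lemma mk_add_pow_smul (j k : ℕ) (m : N) : mk x N (k + j) (x ^ j • m) = mk x N k m := by
  let s (i : ℕ) : Submonoid.powers x := ⟨x ^ i, i, rfl⟩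
  refine congrArg (Submodule.mkQ _)
    (Eq.trans ?_ (IsLocalizedModule.mk'_cancel_right _ m (s k) (s j)))
  exact congrArg (IsLocalizedModule.mk' _ (x ^ j • m)) (Subtype.ext (pow_add x k j))

lemma mk_zero (m : N) : mk x N 0 m = 0 := by
  refine (Submodule.Quotient.mk_eq_zero _).2 ⟨m, ?_⟩
  rw [← IsLocalizedModule.mk'_one (Submonoid.powers x) (LocalizedModule.mkLinearMap _ N)]
  exact congrArg (IsLocalizedModule.mk' _ m) (Subtype.ext (pow_zero x).symm)

lemma mk_pow_smul (k : ℕ) (m : N) : mk x N k (x ^ k • m) = 0 := by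
  rw [← mk_zero (x := x) m, ← mk_add_pow_smul k 0, zero_add]

lemma smul_mk_succ (k : ℕ) (m : N) : x • mk x N (k + 1) m = mk x N k m := by
  rw [← map_smul, ← mk_add_pow_smul 1 k, pow_one]

lemma pow_smul_mk (k : ℕ) (m : N) : x ^ k • mk x N k m = 0 := by
  rw [← map_smul, mk_pow_smul]

lemma exists_pow_smul_eq_of_mk_eq_zero (hx : IsSMulRegular N x) {k : ℕ} {m : N}
    (h : mk x N k m = 0) : ∃ n, x ^ k • n = m := by
  obtain ⟨n, hn⟩ := (Submodule.Quotient.mk_eq_zero _).1 h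
  refine ⟨n, injective_mkLinearMap_powers hx ?_⟩
  rw [map_smul]
  exact (IsLocalizedModule.mk'_eq_iff.1 hn.symm).symm

end AwayQuotient

lemma mem_ofList_cons_smul_top_iff {N : Type*} [AddCommGroup N] [Module A N] {y : A} {rs : List A}
    {n : N} : n ∈ Ideal.ofList (y :: rs) • (⊤ : Submodule A N) ↔
      Submodule.Quotient.mk n ∈ Ideal.ofList rs • (⊤ : Submodule A (QuotSMulTop y N)) := by
  have h : Ideal.ofList rs • (⊤ : Submodule A (QuotSMulTop y N)) =
      (Ideal.ofList rs • (⊤ : Submodule A N)).map (Submodule.mkQ _) := by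
    rw [Submodule.map_smul'', Submodule.map_top, Submodule.range_mkQ]
  rw [Ideal.ofList_cons_smul, ← Submodule.comap_map_mkQ, ← h]
  rfl

lemma map_mem_smul_top {N K : Type*} [AddCommGroup N] [Module A N] [AddCommGroup K] [Module A K]
    (f : N →ₗ[A] K) {I : Ideal A} {n : N} (hn : n ∈ I • (⊤ : Submodule A N)) :
    f n ∈ I • (⊤ : Submodule A K) :=
  Submodule.smul_top_le_comap_smul_top I f hn

section DivisibleExtension

variable {x : A} {L N : Type*} [AddCommGroup L] [Module A L] [AddCommGroup N] [Module A N]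

/-- `f` embeds `L` as the kernel of multiplication by `x` on the `x`-divisible and `x`-power torsion
module `N`, as `m ↦ m / x` does for `L = M ⧸ x M` and `N = M_x ⧸ M`. -/
structure IsDivisibleExtension (x : A) (f : L →ₗ[A] N) : Prop where
  injective : Function.Injective f
  range_eq : LinearMap.range f = LinearMap.ker (LinearMap.lsmul A N x)
  smul_surjective : Function.Surjective (x • · : N → N)
  exists_pow_smul_eq_zero (n : N) : ∃ k, x ^ k • n = 0

namespace IsDivisibleExtension

variable {f : L →ₗ[A] N} (hf : IsDivisibleExtension x f)
include hf

lemma smul_map (l : L) : x • f l = 0 := hf.range_eq.le ⟨l, rfl⟩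

lemma exists_map_eq {n : N} (hn : x • n = 0) : ∃ l, f l = n := hf.range_eq.ge hn

lemma isSMulRegular {y : A} (hy : IsSMulRegular L y) : IsSMulRegular N y := by
  refine .of_right_eq_zero_of_smul fun n hn => ?_
  obtain ⟨k, hk⟩ := hf.exists_pow_smul_eq_zero n
  induction k with
  | zero => simpa only [pow_zero, one_smul] using hk
  | succ k ih =>
    obtain ⟨l, hl⟩ := hf.exists_map_eq (n := x ^ k • n) (by rw [smul_smul, ← pow_succ', hk])
    have hyl : y • l = 0 := hf.injective (by
      rw [map_smul, hl, smul_comm, hn, smul_zero, map_zero])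
    exact ih (by rw [← hl, hy.right_eq_zero_of_smul hyl, map_zero])

lemma quotSMulTop {y : A} (hy : IsSMulRegular L y) :
    IsDivisibleExtension x (QuotSMulTop.map y f) where
  injective := by
    rw [injective_iff_map_eq_zero]
    intro l hl
    obtain ⟨l, rfl⟩ := Submodule.mkQ_surjective _ l
    obtain ⟨n, -, hn : y • n = f l⟩ := (Submodule.Quotient.mk_eq_zero _).1 hl
    have hxn : x • n = 0 := (hf.isSMulRegular hy).right_eq_zero_of_smul (by
      rw [smul_comm, hn, hf.smul_map])
    obtain ⟨l', rfl⟩ := hf.exists_map_eq hxn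
    rw [← map_smul] at hn
    exact (Submodule.Quotient.mk_eq_zero _).2 ⟨l', trivial, hf.injective hn⟩
  range_eq := by
    refine le_antisymm ?_ fun n hn => ?_
    · rintro _ ⟨l, rfl⟩
      obtain ⟨l, rfl⟩ := Submodule.mkQ_surjective _ l
      exact congrArg (Submodule.mkQ _) (hf.smul_map l)
    · obtain ⟨n, rfl⟩ := Submodule.mkQ_surjective _ n
      obtain ⟨n', -, hn' : y • n' = x • n⟩ := (Submodule.Quotient.mk_eq_zero _).1 hn
      obtain ⟨n', rfl⟩ := hf.smul_surjective n'
      obtain ⟨l, hl⟩ := hf.exists_map_eq (n := n - y • n') (by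
        rw [smul_sub, smul_comm, hn', sub_self])
      refine ⟨Submodule.Quotient.mk l, ?_⟩
      rw [QuotSMulTop.map_apply_mk, hl]
      refine (Submodule.Quotient.eq _).2 ⟨-n', trivial, ?_⟩
      change y • -n' = n - y • n' - n
      rw [smul_neg, sub_sub_cancel_left]
  smul_surjective n := by
    obtain ⟨n, rfl⟩ := Submodule.mkQ_surjective _ n
    obtain ⟨n, rfl⟩ := hf.smul_surjective n
    exact ⟨Submodule.Quotient.mk n, rfl⟩
  exists_pow_smul_eq_zero n := by
    obtain ⟨n, rfl⟩ := Submodule.mkQ_surjective _ n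
    obtain ⟨k, hk⟩ := hf.exists_pow_smul_eq_zero n
    exact ⟨k, by rw [← map_smul, hk, map_zero]⟩

theorem isWeaklyRegular {rs : List A} (hrs : IsWeaklyRegular L rs) : IsWeaklyRegular N rs := by
  induction rs generalizing L N with
  | nil => exact .nil A N
  | cons y rs ih =>
    obtain ⟨hy, hrs⟩ := (isWeaklyRegular_cons_iff L y rs).1 hrs
    exact .cons (hf.isSMulRegular hy) (ih (hf.quotSMulTop hy) hrs)

theorem mem_ofList_smul_top_iff {rs : List A} (hrs : IsWeaklyRegular L rs) {l : L} :
    f l ∈ Ideal.ofList rs • (⊤ : Submodule A N) ↔ l ∈ Ideal.ofList rs • (⊤ : Submodule A L) := by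
  refine ⟨fun hl => ?_, map_mem_smul_top f⟩
  induction rs generalizing L N with
  | nil =>
    rw [Ideal.ofList_nil, Submodule.bot_smul, Submodule.mem_bot] at hl ⊢
    exact hf.injective (hl.trans (map_zero f).symm)
  | cons y rs ih =>
    obtain ⟨hy, hrs⟩ := (isWeaklyRegular_cons_iff L y rs).1 hrs
    rw [mem_ofList_cons_smul_top_iff] at hl ⊢
    exact ih (hf.quotSMulTop hy) hrs hl

end IsDivisibleExtension

end DivisibleExtension

section

variable {x : A} {N : Type u} [AddCommGroup N] [Module A N]

variable (x N) in
/-- The map `m ↦ m / x` from `N ⧸ x N` to `N_x ⧸ N`. -/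
def AwayQuotient.ofQuotSMulTop : QuotSMulTop x N →ₗ[A] AwayQuotient x N :=
  Submodule.liftQ _ (AwayQuotient.mk x N 1) fun m hm => by
    obtain ⟨n, -, rfl⟩ := hm
    have h : AwayQuotient.mk x N 1 (x ^ 1 • n) = 0 := AwayQuotient.mk_pow_smul 1 n
    rwa [pow_one] at h

lemma isDivisibleExtension_ofQuotSMulTop (hx : IsSMulRegular N x) :
    IsDivisibleExtension x (AwayQuotient.ofQuotSMulTop x N) where
  injective := by
    rw [injective_iff_map_eq_zero]
    intro l hl
    obtain ⟨m, rfl⟩ := Submodule.mkQ_surjective _ l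
    obtain ⟨n, hn⟩ := AwayQuotient.exists_pow_smul_eq_of_mk_eq_zero hx hl
    rw [pow_one] at hn
    exact (Submodule.Quotient.mk_eq_zero _).2 ⟨n, trivial, hn⟩
  range_eq := by
    refine le_antisymm ?_ fun q hq => ?_
    · rintro _ ⟨l, rfl⟩
      obtain ⟨m, rfl⟩ := Submodule.mkQ_surjective _ l
      exact (AwayQuotient.smul_mk_succ 0 m).trans (AwayQuotient.mk_zero m)
    · obtain ⟨k, m, rfl⟩ := AwayQuotient.exists_mk_eq q
      cases k with
      | zero =>
        rw [AwayQuotient.mk_zero]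
        exact zero_mem _
      | succ k =>
        rw [LinearMap.mem_ker, LinearMap.lsmul_apply, AwayQuotient.smul_mk_succ] at hq
        obtain ⟨n, rfl⟩ := AwayQuotient.exists_pow_smul_eq_of_mk_eq_zero hx hq
        refine ⟨Submodule.Quotient.mk n, ?_⟩
        rw [add_comm k, AwayQuotient.mk_add_pow_smul]
        rfl
  smul_surjective q := by
    obtain ⟨k, m, rfl⟩ := AwayQuotient.exists_mk_eq q
    exact ⟨AwayQuotient.mk x N (k + 1) m, AwayQuotient.smul_mk_succ k m⟩
  exists_pow_smul_eq_zero q := by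
    obtain ⟨k, m, rfl⟩ := AwayQuotient.exists_mk_eq q
    exact ⟨k, AwayQuotient.pow_smul_mk k m⟩

end

/-- The iterated quotient `(⋯(N_{x₁} ⧸ N)_{x₂} ⧸ ⋯)`, i.e. the top Čech cohomology of `N` with
respect to the list. -/
def topCech : List A → ModuleCat.{u} A → ModuleCat.{u} A
  | [], N => N
  | x :: rs, N => topCech rs (ModuleCat.of A (AwayQuotient x N))

/-- The map `m ↦ m / (x₁ ⋯ xₜ)` into the top Čech cohomology. -/
def toTopCech : (rs : List A) → (N : ModuleCat.{u} A) → N →ₗ[A] topCech rs N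
  | [], _ => LinearMap.id
  | x :: rs, N =>
    toTopCech rs (ModuleCat.of A (AwayQuotient x N)) ∘ₗ AwayQuotient.mk x N 1

theorem ker_toTopCech {rs : List A} {N : ModuleCat.{u} A} (hrs : IsWeaklyRegular N rs) :
    LinearMap.ker (toTopCech rs N) = Ideal.ofList rs • ⊤ := by
  induction rs generalizing N with
  | nil => exact LinearMap.ker_id.trans (by rw [Ideal.ofList_nil, Submodule.bot_smul])
  | cons x rs ih =>
    obtain ⟨hx, hrs⟩ := (isWeaklyRegular_cons_iff N x rs).1 hrs
    have hdiv := isDivisibleExtension_ofQuotSMulTop hx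
    ext m
    rw [mem_ofList_cons_smul_top_iff, ← hdiv.mem_ofList_smul_top_iff hrs]
    exact SetLike.ext_iff.1 (ih (N := ModuleCat.of A (AwayQuotient x N))
      (hdiv.isWeaklyRegular hrs)) (AwayQuotient.mk x N 1 m)

lemma exists_mem_range_topCech (rs : List A) {N : ModuleCat.{u} A} (q : topCech rs N) :
    ∃ φ : N →ₗ[A] topCech rs N, q ∈ LinearMap.range φ ∧
      Ideal.ofList rs ≤ (LinearMap.range φ).annihilator.radical := by
  induction rs generalizing N with
  | nil =>
    exact ⟨LinearMap.id, ⟨q, rfl⟩, Ideal.ofList_nil.trans_le bot_le⟩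
  | cons x rs ih =>
    obtain ⟨φ, ⟨q', hq'⟩, hφ⟩ := ih (N := ModuleCat.of A (AwayQuotient x N)) q
    obtain ⟨k, m, rfl⟩ := AwayQuotient.exists_mk_eq q'
    have hk (m : N) : x ^ k • φ (AwayQuotient.mk x N k m) = 0 := by
      rw [← map_smul, AwayQuotient.pow_smul_mk, map_zero]
    refine ⟨φ ∘ₗ AwayQuotient.mk x N k, ⟨m, hq'⟩, ?_⟩
    rw [Ideal.ofList_cons, sup_le_iff, Ideal.span_singleton_le_iff_mem]
    refine ⟨⟨k, Submodule.mem_annihilator.2 ?_⟩, hφ.trans (Ideal.radical_mono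
      (Submodule.annihilator_mono (LinearMap.range_comp_le_range _ _)))⟩
    rintro _ ⟨m, rfl⟩
    exact hk m

lemma pow_smul_top_le_pow_smul_top {N : Type*} [AddCommGroup N] [Module A N] {c I : Ideal A}
    (h : c • (⊤ : Submodule A N) ≤ I • ⊤) (n : ℕ) :
    c ^ n • (⊤ : Submodule A N) ≤ I ^ n • ⊤ := by
  induction n with
  | zero => rw [pow_zero, pow_zero]
  | succ n ih =>
    calc c ^ (n + 1) • (⊤ : Submodule A N) = c ^ n • c • ⊤ := by rw [pow_succ, Submodule.mul_smul]
      _ ≤ c ^ n • I • ⊤ := Submodule.smul_mono le_rfl h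
      _ = I • c ^ n • ⊤ := by rw [← Submodule.mul_smul, mul_comm, Submodule.mul_smul]
      _ ≤ I • I ^ n • ⊤ := Submodule.smul_mono le_rfl ih
      _ = I ^ (n + 1) • ⊤ := by rw [← Submodule.mul_smul, ← pow_succ']

theorem isPowerTorsion_topCech {rs : List A} {N : ModuleCat.{u} A} {c : Ideal A}
    (hc : c • (⊤ : Submodule A N) ≤ Ideal.ofList rs • ⊤) : IsPowerTorsion c (topCech rs N) := by
  intro q
  obtain ⟨φ, ⟨m, rfl⟩, hφ⟩ := exists_mem_range_topCech rs q
  obtain ⟨n, hn⟩ := Ideal.exists_pow_le_of_le_radical_of_fg hφ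
    (Submodule.fg_span rs.finite_toSet)
  have hker : Ideal.ofList rs ^ n • ⊤ ≤ LinearMap.ker φ := Submodule.smul_le.2 fun r hr m _ => by
    rw [LinearMap.mem_ker, map_smul]
    exact Submodule.mem_annihilator.1 (hn hr) _ ⟨m, rfl⟩
  refine ⟨n, fun r hr => ?_⟩
  rw [← map_smul]
  exact hker (pow_smul_top_le_pow_smul_top hc n (Submodule.smul_mem_smul hr trivial))

end TopCech

section RegularShift

variable {A : Type u} [CommRing A] {c : Ideal A}

lemma bijective_localCohomologyδ {S : ShortComplex (ModuleCat.{u} A)} (hS : S.ShortExact)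
    (h : ∀ i, Subsingleton ((localCohomology c i).obj S.X₂)) (i : ℕ) :
    Function.Bijective (localCohomologyδ c hS i).hom := by
  refine ⟨(injective_iff_map_eq_zero _).2 fun y hy => ?_, fun z => ?_⟩
  · obtain ⟨z, rfl⟩ := (localCohomology_exact₃ c hS i y).1 hy
    rw [(h i).elim z 0]
    exact map_zero _
  · exact (localCohomology_exact₁ c hS i z).1 ((h (i + 1)).elim _ _)

lemma subsingleton_localCohomology_localizedModule {x : A} (hxc : x ∈ c) (N : Type u)
    [AddCommGroup N] [Module A N] (i : ℕ) : Subsingleton ((localCohomology c i).obj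
      (ModuleCat.of A (LocalizedModule (Submonoid.powers x) N))) :=
  subsingleton_localCohomology_of_bijective_smul hxc ((Module.End.isUnit_iff _).1
    (IsLocalizedModule.map_units (LocalizedModule.mkLinearMap (Submonoid.powers x) N)
      (⟨x, Submonoid.mem_powers x⟩ : Submonoid.powers x))) i

/-- The connecting isomorphism of `0 → N → N_x → N_x ⧸ N → 0`, whose middle term is acyclic. -/
def localCohomologyAwayQuotientEquiv {x : A} (hxc : x ∈ c) {N : Type u} [AddCommGroup N]
    [Module A N] (hx : IsSMulRegular N x) (i : ℕ) :
    (localCohomology c i).obj (ModuleCat.of A (AwayQuotient x N)) ≃ₗ[A]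
      (localCohomology c (i + 1)).obj (ModuleCat.of A N) :=
  LinearEquiv.ofBijective
    (localCohomologyδ c (cokernelShortComplex_shortExact (injective_mkLinearMap_powers hx)) i).hom
    (bijective_localCohomologyδ _ (subsingleton_localCohomology_localizedModule hxc N) i)

lemma subsingleton_localCohomology_zero_of_isSMulRegular {x : A} (hxc : x ∈ c) {N : ModuleCat.{u} A}
    (hx : IsSMulRegular N x) : Subsingleton ((localCohomology c 0).obj N) := by
  refine (localCohomologyZeroEquiv c N).subsingleton_congr.2
    (subsingleton_of_forall_eq 0 fun ⟨m, hm⟩ => Subtype.ext ?_)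
  obtain ⟨n, hn⟩ := mem_primaryComponent_iff.1 hm
  exact (hx.pow n).right_eq_zero_of_smul (hn _ (Ideal.pow_mem_pow hxc n))

variable {rs : List A} {N : ModuleCat.{u} A}

theorem nonempty_localCohomology_topCech_equiv (hrs : IsWeaklyRegular N rs)
    (hc : ∀ r ∈ rs, r ∈ c) (i : ℕ) :
    Nonempty ((localCohomology c i).obj (topCech rs N) ≃ₗ[A]
      (localCohomology c (i + rs.length)).obj N) := by
  induction rs generalizing N with
  | nil => exact ⟨LinearEquiv.refl A _⟩
  | cons x rs ih =>
    obtain ⟨hx, hrs⟩ := (isWeaklyRegular_cons_iff N x rs).1 hrs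
    obtain ⟨hxc, hc⟩ := List.forall_mem_cons.1 hc
    obtain ⟨e⟩ := ih (N := ModuleCat.of A (AwayQuotient x N))
      ((isDivisibleExtension_ofQuotSMulTop hx).isWeaklyRegular hrs) hc
    exact ⟨e.trans (localCohomologyAwayQuotientEquiv hxc hx _)⟩

theorem nonempty_localCohomology_length_equiv (hrs : IsWeaklyRegular N rs)
    (hc : ∀ r ∈ rs, r ∈ c) :
    Nonempty ((localCohomology c rs.length).obj N ≃ₗ[A] c.primaryComponent (topCech rs N)) := by
  obtain ⟨e⟩ := nonempty_localCohomology_topCech_equiv hrs hc 0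
  rw [Nat.zero_add] at e
  exact ⟨e.symm.trans (localCohomologyZeroEquiv c _)⟩

theorem subsingleton_localCohomology_of_lt_length (hrs : IsWeaklyRegular N rs)
    (hc : ∀ r ∈ rs, r ∈ c) {i : ℕ} (hi : i < rs.length) :
    Subsingleton ((localCohomology c i).obj N) := by
  induction rs generalizing N i with
  | nil => exact absurd hi (Nat.not_lt_zero i)
  | cons x rs ih =>
    obtain ⟨hx, hrs⟩ := (isWeaklyRegular_cons_iff N x rs).1 hrs
    obtain ⟨hxc, hc⟩ := List.forall_mem_cons.1 hc
    cases i with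
    | zero => exact subsingleton_localCohomology_zero_of_isSMulRegular hxc hx
    | succ i =>
      exact (localCohomologyAwayQuotientEquiv hxc hx i).subsingleton_congr.1
        (ih (N := ModuleCat.of A (AwayQuotient x N))
          ((isDivisibleExtension_ofQuotSMulTop hx).isWeaklyRegular hrs) hc
          (Nat.lt_of_succ_lt_succ hi))

theorem nontrivial_localCohomology_length (hrs : IsWeaklyRegular N rs) (hc : ∀ r ∈ rs, r ∈ c)
    {m : N} (hm : m ∉ Ideal.ofList rs • (⊤ : Submodule A N))
    (hcm : ∀ r ∈ c, r • m ∈ Ideal.ofList rs • (⊤ : Submodule A N)) :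
    Nontrivial ((localCohomology c rs.length).obj N) := by
  rw [← ker_toTopCech hrs] at hm hcm
  have hmem : toTopCech rs N m ∈ c.primaryComponent (topCech rs N) :=
    mem_primaryComponent_iff.2 ⟨1, fun r hr =>
      (map_smul _ r m).symm.trans (hcm r (by rwa [pow_one] at hr))⟩
  have : Nontrivial (c.primaryComponent (topCech rs N)) :=
    nontrivial_of_ne ⟨_, hmem⟩ 0 fun h => hm (congrArg Subtype.val h)
  obtain ⟨e⟩ := nonempty_localCohomology_length_equiv hrs hc
  exact e.nontrivial

end RegularShift

section CohDim

variable {A : Type u} [CommRing A] {a : Ideal A} {N : Type u} [AddCommGroup N] [Module A N]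

lemma natCast_le_cohDim {i : ℕ} (h : Nontrivial ((localCohomology a i).obj (ModuleCat.of A N))) :
    (i : ℕ∞) ≤ cohDim a N :=
  le_sSup ⟨i, rfl, h⟩

lemma cohDim_le_iff {n : ℕ∞} : cohDim a N ≤ n ↔
    ∀ i : ℕ, Nontrivial ((localCohomology a i).obj (ModuleCat.of A N)) → (i : ℕ∞) ≤ n :=
  sSup_le_iff.trans ⟨fun h i hi => h i ⟨i, rfl, hi⟩, by rintro h _ ⟨i, rfl, hi⟩; exact h i hi⟩

variable (a) in
lemma cohDim_congr {L : Type u} [AddCommGroup L] [Module A L] (e : L ≃ₗ[A] N) :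
    cohDim a L = cohDim a N := by
  have h (i : ℕ) : Nontrivial ((localCohomology a i).obj (ModuleCat.of A L)) ↔
      Nontrivial ((localCohomology a i).obj (ModuleCat.of A N)) :=
    ((localCohomology a i).mapIso e.toModuleIso).toLinearEquiv.toEquiv.nontrivial_congr
  simp only [cohDim, h]

theorem cohDim_eq_cohDim_topCech_add {rs : List A} (hrs : IsWeaklyRegular N rs)
    (ha : ∀ r ∈ rs, r ∈ a)
    (h : Nontrivial ((localCohomology a rs.length).obj (ModuleCat.of A N))) :
    cohDim a N = cohDim a (topCech rs (ModuleCat.of A N)) + (rs.length : ℕ∞) := by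
  have hiff (i : ℕ) : Nontrivial ((localCohomology a i).obj (topCech rs (ModuleCat.of A N))) ↔
      Nontrivial ((localCohomology a (i + rs.length)).obj (ModuleCat.of A N)) :=
    (nonempty_localCohomology_topCech_equiv (N := ModuleCat.of A N) hrs ha i).elim fun e =>
      e.toEquiv.nontrivial_congr
  refine le_antisymm (cohDim_le_iff.2 fun i hi => ?_) ?_
  · have hlen : rs.length ≤ i := not_lt.1 fun hlt => not_subsingleton _
      (subsingleton_localCohomology_of_lt_length (N := ModuleCat.of A N) hrs ha hlt)
    obtain ⟨p, rfl⟩ := Nat.exists_eq_add_of_le' hlen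
    rw [Nat.cast_add]
    gcongr
    exact natCast_le_cohDim ((hiff p).2 hi)
  · have hsub : cohDim a (topCech rs (ModuleCat.of A N)) ≤ cohDim a N - rs.length :=
      cohDim_le_iff.2 fun i hi =>
        ENat.le_sub_of_add_le_right (ENat.natCast_ne_top _)
          (by exact_mod_cast natCast_le_cohDim ((hiff i).1 hi))
    calc cohDim a (topCech rs (ModuleCat.of A N)) + (rs.length : ℕ∞)
        ≤ (cohDim a N - rs.length) + rs.length := by gcongr
      _ = cohDim a N := tsub_add_cancel_of_le (natCast_le_cohDim h)

theorem cohDim_eq_of_isPowerTorsion_quotient [IsNoetherianRing A] {L : Submodule A N}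
    (hL : IsPowerTorsion a (N ⧸ L)) (hN : 0 < cohDim a N) : cohDim a L = cohDim a N := by
  have hS := cokernelShortComplex_shortExact L.subtype_injective
  have hX₃ (i : ℕ) : Subsingleton ((localCohomology a (i + 1)).obj
      (cokernelShortComplex L.subtype).X₃) :=
    IsPowerTorsion.subsingleton_localCohomology_succ (a := a)
      (L := N ⧸ LinearMap.range L.subtype) (by rwa [Submodule.range_subtype]) i
  have hsurj (i : ℕ) : Function.Surjective
      ((localCohomology a (i + 1)).map (ModuleCat.ofHom L.subtype)) := fun y =>
    (localCohomology_exact₂ a hS (i + 1) y).1 ((hX₃ i).elim _ _)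
  have hinj (i : ℕ) : Function.Injective
      ((localCohomology a (i + 2)).map (ModuleCat.ofHom L.subtype)) :=
    (injective_iff_map_eq_zero ((localCohomology a (i + 2)).map _).hom).2 fun y hy => by
      obtain ⟨z, rfl⟩ := (localCohomology_exact₁ a hS (i + 1) y).1 hy
      rw [(hX₃ i).elim z 0]
      exact map_zero _
  refine le_antisymm (cohDim_le_iff.2 fun i hi => ?_) (cohDim_le_iff.2 fun i hi => ?_)
  · match i with
    | 0 => exact bot_le
    | 1 => exact Order.one_le_iff_pos.2 hN
    | i + 2 => exact natCast_le_cohDim (hinj i).nontrivial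
  · match i with
    | 0 => exact bot_le
    | i + 1 => exact natCast_le_cohDim (hsurj i).nontrivial

lemma gradeM_eq_length {rs : List A} (hrs : IsRegular N rs) (ha : ∀ r ∈ rs, r ∈ a)
    (h : Nontrivial ((localCohomology a rs.length).obj (ModuleCat.of A N))) :
    gradeM a N = rs.length := by
  refine IsGreatest.csSup_eq ⟨⟨rs, rfl, ha, hrs⟩, ?_⟩
  rintro _ ⟨ss, rfl, hss, hreg⟩
  exact not_lt.1 fun hlt => not_subsingleton _ (subsingleton_localCohomology_of_lt_length
    (N := ModuleCat.of A N) hreg.toIsWeaklyRegular hss hlt)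

end CohDim

section Linkage

variable {A : Type u} [CommRing A] {I a b : Ideal A} {N : Type u} [AddCommGroup N] [Module A N]

lemma mem_modColon_iff {L : Submodule A N} {m : N} :
    m ∈ Submodule.modColon L a ↔ ∀ r ∈ a, r • m ∈ L := by
  simp only [Submodule.modColon, Submodule.mem_iInf, Submodule.mem_comap, LinearMap.lsmul_apply]

lemma exists_notMem_smul_top_of_isLinkedBy (h : Ideal.IsLinkedBy N I a b) :
    ∃ m ∉ I • (⊤ : Submodule A N), ∀ r ∈ a, r • m ∈ I • (⊤ : Submodule A N) := by
  obtain ⟨-, -, haN, -, hcolon_a, hcolon_b⟩ := h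
  by_contra! hcon
  have hb_le : b • (⊤ : Submodule A N) ≤ I • ⊤ := fun m hm => by
    by_contra hm'
    obtain ⟨r, hr, hrm⟩ := hcon m hm'
    rw [← hcolon_a, mem_modColon_iff] at hm
    exact hrm (hm r hr)
  refine haN (hcolon_b ▸ eq_top_iff.2 fun m _ => mem_modColon_iff.2 fun r hr => ?_)
  exact hb_le (Submodule.smul_mem_smul hr trivial)

lemma mul_smul_top_le_of_isLinkedBy (h : Ideal.IsLinkedBy N I a b) :
    (a * b) • (⊤ : Submodule A N) ≤ I • ⊤ := by
  obtain ⟨-, -, -, -, hcolon_a, -⟩ := h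
  rw [Submodule.mul_smul, ← hcolon_a]
  exact Submodule.smul_le.2 fun r hr m hm => mem_modColon_iff.1 hm r hr

end Linkage

theorem stmt10_general {R : Type u} [CommRing R] [IsNoetherianRing R] {M : Type u}
    [AddCommGroup M] [Module R M] (I a b : Ideal R) (h : Ideal.IsLinkedBy M I a b)
    (hncm : (gradeM a M : ℕ∞) < cohDim a M) :
    cohDim a M =
      cohDim a ↥((localCohomology b (gradeM a M)).obj (ModuleCat.of R M)) +
        (gradeM a M : ℕ∞) := by
  obtain ⟨m, hm, ham⟩ := exists_notMem_smul_top_of_isLinkedBy h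
  have hab := mul_smul_top_le_of_isLinkedBy h
  obtain ⟨⟨rs, hrs, rfl⟩, hI, -⟩ := h
  have hrs_a : ∀ r ∈ rs, r ∈ a := Ideal.span_le.1 (hI.trans inf_le_left)
  have hrs_b : ∀ r ∈ rs, r ∈ b := Ideal.span_le.1 (hI.trans inf_le_right)
  let M' := ModuleCat.of R M
  have hreg : IsWeaklyRegular M' rs := hrs.toIsWeaklyRegular
  have hnontrivial := nontrivial_localCohomology_length hreg hrs_a hm ham
  have hgrade : gradeM a M = rs.length := gradeM_eq_length hrs hrs_a hnontrivial
  let K := topCech rs M'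
  have hM : cohDim a M = cohDim a K + rs.length :=
    cohDim_eq_cohDim_topCech_add hreg hrs_a hnontrivial
  have hK : 0 < cohDim a K := pos_iff_ne_zero.2 fun hK => by
    rw [hgrade, hM, hK, zero_add] at hncm
    exact hncm.false
  have hΓ : cohDim a (b.primaryComponent K) = cohDim a K :=
    cohDim_eq_of_isPowerTorsion_quotient (isPowerTorsion_topCech hab).quotient_primaryComponent hK
  obtain ⟨e⟩ := nonempty_localCohomology_length_equiv hreg hrs_b
  rw [hgrade, hM, ← hΓ, cohDim_congr a e]

theorem stmt10 (I a b : Ideal R) (h : Ideal.IsLinkedBy M I a b)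
    (hgeo : a • (⊤ : Submodule R M) ⊓ b • (⊤ : Submodule R M) = I • (⊤ : Submodule R M))
    (hncm : (gradeM a M : ℕ∞) < cohDim a M) :
    cohDim a M =
      cohDim a ↥((localCohomology b (gradeM a M)).obj (ModuleCat.of R M)) +
        (gradeM a M : ℕ∞) :=
  stmt10_general I a b h hncm
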